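/- The explicit series Ψ₀ satisfies equation (21): Σ_{n≥0} Ψ₀^{2n}·(uv)^n/(2n)! + Σ_{n≥0} Ψ₀^{2n+1}·u^{n+1}·v^n/(2n+1)! = 1 + u. Consequently Ψ₀ is the unique solution of equation (21) in ℚ[[u,v]]. -/

import Mathlib

noncomputable section

abbrev R2 := MvPowerSeries (Fin 2) ℚ

def u : R2 := MvPowerSeries.X 0
def v : R2 := MvPowerSeries.X 1

def mdeg {n : ℕ} (m : Fin n →₀ ℕ) : ℕ := m.sum fun _ k => k

/-- Σ_{n≥0} Ψ^{2n}·(uv)^n/(2n)!  (coefficientwise finite sum) -/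
def S1 (P : R2) : R2 := fun m => ∑ n ∈ Finset.range (mdeg m + 1),
  MvPowerSeries.coeff (R := ℚ) m ((((2*n).factorial : ℚ))⁻¹ • (P ^ (2*n) * (u * v) ^ n))

/-- Σ_{n≥0} Ψ^{2n+1}·u^{n+1}·v^n/(2n+1)!  (coefficientwise finite sum) -/
def S2 (P : R2) : R2 := fun m => ∑ n ∈ Finset.range (mdeg m + 1),
  MvPowerSeries.coeff (R := ℚ) m ((((2*n+1).factorial : ℚ))⁻¹ • (P ^ (2*n+1) * u ^ (n+1) * v ^ n))

/-- equation (21): cosh(Ψ√(uv)) + √(u/v)·sinh(Ψ√(uv)) = 1 + u, expanded -/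
def Eq21 (P : R2) : Prop := S1 P + S2 P = 1 + u

/-- generalized binomial coefficient C(−1/2, n) = (−1)ⁿ (2n choose n)/4ⁿ -/
def cb (n : ℕ) : ℚ := (-1)^n * (Nat.choose (2*n) n : ℚ) / 4^n

/-- Ψ₀ = Σ_{p,q} C(−1/2,p) C(−1/2,q) u^p v^q (u+2)^{p+q+1}/(2(p+q+1))
(coefficientwise finite sum). -/
def Psi0 : R2 := fun m =>
  ∑ p ∈ Finset.range (mdeg m + 1), ∑ q ∈ Finset.range (mdeg m + 1),
    MvPowerSeries.coeff (R := ℚ) m ((cb p * cb q / (2*(p+q+1))) • (u ^ p * v ^ q * (u + 2) ^ (p+q+1)))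

/-!
Let `E = u ∂/∂u + v ∂/∂v`. The conjugate `B` of the left-hand side `A` of (21), obtained by
exchanging `u` and `v` in the coefficients, satisfies `E A = u (E Ψ + Ψ) B` and
`E B = v (E Ψ + Ψ) A`. If `A = 1 + u`, then `(E Ψ + Ψ) B = 1` and `E (B ^ 2) = 2 v (1 + u)`, so that
`B ^ 2 = 1 + v (u + 2)` and `E Ψ + Ψ = (1 + v (u + 2)) ^ (-1/2)`. Conversely, if `Ψ` solves this
linear equation, then `A - (1 + u)` and `B - (1 + v (u + 2)) ^ (1/2)` satisfy a homogeneous system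
whose coefficients have no constant term, so both vanish by comparing orders. Hence (21) is
equivalent to the linear equation, which has a unique solution since `E + 1` multiplies each
monomial by a positive integer. The series `Ψ₀` solves it: applying `E + 1` termwise gives
`(1 + u) (1 + u (u + 2)) ^ (-1/2) (1 + v (u + 2)) ^ (-1/2)`, whose first two factors cancel.
-/

open MvPowerSeries

section EulerDerivation

variable {σ R : Type*} [CommRing R]

/-- The Euler derivation `∑ i, X i * ∂/∂X i`, encoded as the operator multiplying every monomial by
its degree so that infinitely many variables are allowed. -/
def euler : Derivation R (MvPowerSeries σ R) (MvPowerSeries σ R) :=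
  Derivation.mk'
    { toFun f := fun m => (m.degree : R) * coeff m f
      map_add' f g := by ext m; exact mul_add _ (coeff m f) (coeff m g)
      map_smul' c f := by ext m; exact mul_left_comm _ c (coeff m f) }
    fun f g => by
      classical
      ext m
      change (m.degree : R) * coeff m (f * g) = coeff m (f * _ + g * _)
      rw [mul_comm g, map_add, coeff_mul, coeff_mul, coeff_mul, Finset.mul_sum,
        ← Finset.sum_add_distrib]
      refine Finset.sum_congr rfl fun i hi => ?_
      change _ = coeff i.1 f * (i.2.degree * coeff i.2 g) + i.1.degree * coeff i.1 f * coeff i.2 g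
      rw [← Finset.HasAntidiagonal.mem_antidiagonal.mp hi, map_add, Nat.cast_add]
      ring

theorem coeff_euler (m : σ →₀ ℕ) (f : MvPowerSeries σ R) :
    coeff m (euler f) = m.degree * coeff m f := rfl

theorem coeff_euler_add_self (m : σ →₀ ℕ) (f : MvPowerSeries σ R) :
    coeff m (euler f + f) = (m.degree + 1) * coeff m f := by
  rw [map_add, coeff_euler, add_one_mul]

theorem constantCoeff_euler (f : MvPowerSeries σ R) : constantCoeff (euler f) = 0 := by
  rw [← coeff_zero_eq_constantCoeff_apply, coeff_euler]
  simp

theorem constantCoeff_eq_zero_of_euler_eq_self {f : MvPowerSeries σ R} (h : euler f = f) :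
    constantCoeff f = 0 :=
  h ▸ constantCoeff_euler f

theorem euler_X (i : σ) : euler (X i : MvPowerSeries σ R) = X i := by
  classical
  ext m
  rw [coeff_euler, coeff_X]
  split_ifs with h <;> simp [h]

theorem euler_ofNat (n : ℕ) [n.AtLeastTwo] :
    euler (ofNat(n) : MvPowerSeries σ R) = 0 :=
  euler.map_natCast n

theorem euler_mul (f g : MvPowerSeries σ R) : euler (f * g) = f * euler g + g * euler f :=
  euler.leibniz f g

theorem euler_pow_succ (f : MvPowerSeries σ R) (n : ℕ) :
    euler (f ^ (n + 1)) = (n + 1) * f ^ n * euler f := by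
  rw [euler.leibniz_pow, nsmul_eq_mul, smul_eq_mul, add_tsub_cancel_right, Nat.cast_add_one,
    mul_assoc]

theorem euler_pow_of_euler_eq_self {f : MvPowerSeries σ R} (h : euler f = f) (n : ℕ) :
    euler (f ^ n) = n * f ^ n := by
  cases n with
  | zero => simp
  | succ n => rw [euler_pow_succ, h, Nat.cast_add_one, pow_succ, mul_assoc]

theorem euler_sq_mul_of_euler_eq_two_mul {P z : MvPowerSeries σ R} (hz : euler z = 2 * z) :
    euler (P ^ 2 * z) = 2 * (P * z * (euler P + P)) := by
  rw [euler_mul, euler_pow_succ, hz]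
  push_cast
  ring

theorem euler_one_add_mul_add_two {x y : MvPowerSeries σ R} (hx : euler x = x) (hy : euler y = y) :
    euler (1 + y * (x + 2)) = 2 * (y * (1 + x)) := by
  rw [map_add, euler.map_one_eq_zero, euler_mul, map_add, euler_ofNat, hx, hy]
  ring

theorem euler_pow_mul_pow_mul_add_two_pow_add_self {x y : MvPowerSeries σ R} (hx : euler x = x)
    (hy : euler y = y) (p q : ℕ) :
    euler (x ^ p * y ^ q * (x + 2) ^ (p + q + 1)) + x ^ p * y ^ q * (x + 2) ^ (p + q + 1) =
      C (2 * (p + q + 1) : R) * ((1 + x) * (x * (x + 2)) ^ p * (y * (x + 2)) ^ q) := by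
  rw [euler_mul, euler_mul, euler_pow_of_euler_eq_self hx, euler_pow_of_euler_eq_self hy,
    euler_pow_succ, map_add, hx, euler_ofNat]
  push_cast
  simp only [map_mul, map_add, map_natCast, map_one, map_ofNat, mul_pow]
  ring

section TorsionFree

variable [IsAddTorsionFree R] {f g : MvPowerSeries σ R}

theorem eq_of_euler_eq (h : euler f = euler g) (h₀ : constantCoeff f = constantCoeff g) :
    f = g := by
  ext m
  obtain rfl | hm := eq_or_ne m 0
  · exact h₀
  have hcoeff := congrArg (coeff m) h
  simp only [coeff_euler, ← nsmul_eq_mul] at hcoeff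
  exact nsmul_right_injective (mt (Finsupp.degree_eq_zero_iff m).mp hm) hcoeff

theorem eq_of_euler_add_self_eq (h : euler f + f = euler g + g) : f = g := by
  ext m
  have hcoeff := congrArg (coeff m) h
  simp only [coeff_euler_add_self, ← Nat.cast_add_one, ← nsmul_eq_mul] at hcoeff
  exact nsmul_right_injective m.degree.succ_ne_zero hcoeff

theorem order_euler_le (h₀ : constantCoeff f = 0) : (euler f).order ≤ f.order := by
  refine le_order fun m hm => ?_
  obtain rfl | hm₀ := eq_or_ne m 0
  · exact h₀
  have hcoeff := coeff_of_lt_order hm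
  rw [coeff_euler, ← nsmul_eq_mul] at hcoeff
  exact (nsmul_eq_zero_iff_right (mt (Finsupp.degree_eq_zero_iff m).mp hm₀)).mp hcoeff

theorem order_add_one_le_of_euler_eq_mul {c : MvPowerSeries σ R} (hc : constantCoeff c = 0)
    (hf : constantCoeff f = 0) (h : euler f = c * g) : g.order + 1 ≤ f.order :=
  calc
    g.order + 1 ≤ c.order + g.order := by
      rw [add_comm]
      gcongr
      exact one_le_order_iff_constCoeff_eq_zero.mpr hc
    _ ≤ (euler f).order := h ▸ le_order_mul
    _ ≤ f.order := order_euler_le hf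

theorem eq_zero_of_euler_eq_mul {c d : MvPowerSeries σ R}
    (hc : constantCoeff c = 0) (hd : constantCoeff d = 0)
    (hf : constantCoeff f = 0) (hg : constantCoeff g = 0)
    (hfg : euler f = c * g) (hgf : euler g = d * f) : f = 0 := by
  have hle : f.order + 1 ≤ f.order :=
    calc
      f.order + 1 ≤ g.order := order_add_one_le_of_euler_eq_mul hd hg hgf
      _ ≤ g.order + 1 := le_self_add
      _ ≤ f.order := order_add_one_le_of_euler_eq_mul hc hf hfg
  by_contra hne
  exact (ENat.add_one_le_iff (mt order_eq_top_iff.mp hne)).mp hle |>.false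

end TorsionFree

end EulerDerivation

section Substitution

variable {σ R : Type*} [CommRing R] {a b : MvPowerSeries σ R}

theorem coeff_subst_eq_sum_range (ha : constantCoeff a = 0) (f : PowerSeries R) {m : σ →₀ ℕ}
    {N : ℕ} (hN : m.degree < N) :
    coeff m (f.subst a) = ∑ k ∈ Finset.range N, PowerSeries.coeff k f * coeff m (a ^ k) := by
  rw [PowerSeries.coeff_subst (.of_constantCoeff_zero ha)]
  refine finsum_eq_sum_of_support_subset _ fun k hk => ?_
  by_contra hkN
  have hNk : N ≤ k := by simpa using hkN
  refine hk ?_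
  have hlt : (m.degree : ℕ∞) < (a ^ k).order :=
    lt_of_lt_of_le (by exact_mod_cast hN.trans_le hNk)
      (le_order_pow_of_constantCoeff_eq_zero k ha)
  simp only [coeff_of_lt_order hlt, smul_zero]

theorem coeff_mul_subst_eq_sum_range (ha : constantCoeff a = 0) (w : MvPowerSeries σ R)
    (f : PowerSeries R) {m : σ →₀ ℕ} {N : ℕ} (hN : m.degree < N) :
    coeff m (w * f.subst a) =
      ∑ k ∈ Finset.range N, PowerSeries.coeff k f * coeff m (w * a ^ k) := by
  classical
  simp only [coeff_mul, Finset.mul_sum]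
  rw [Finset.sum_comm]
  refine Finset.sum_congr rfl fun i hi => ?_
  have hle : i.2.degree ≤ m.degree := by
    rw [← Finset.HasAntidiagonal.mem_antidiagonal.mp hi, map_add]
    exact le_add_self
  rw [coeff_subst_eq_sum_range ha f (hle.trans_lt hN), Finset.mul_sum]
  exact Finset.sum_congr rfl fun k _ => mul_left_comm ..

theorem coeff_mul_subst_mul_subst_eq_sum_range (ha : constantCoeff a = 0)
    (hb : constantCoeff b = 0) (w : MvPowerSeries σ R) (f g : PowerSeries R) {m : σ →₀ ℕ} {N : ℕ}
    (hN : m.degree < N) :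
    coeff m (w * f.subst a * g.subst b) =
      ∑ p ∈ Finset.range N, ∑ q ∈ Finset.range N,
        PowerSeries.coeff p f * PowerSeries.coeff q g * coeff m (w * a ^ p * b ^ q) := by
  rw [mul_right_comm, coeff_mul_subst_eq_sum_range ha _ f hN]
  refine Finset.sum_congr rfl fun p _ => ?_
  rw [mul_right_comm, coeff_mul_subst_eq_sum_range hb _ g hN, Finset.mul_sum]
  simp only [mul_assoc]

theorem constantCoeff_subst_eq_constantCoeff (ha : constantCoeff a = 0) (f : PowerSeries R) :
    constantCoeff (f.subst a) = PowerSeries.constantCoeff f := by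
  rw [← coeff_zero_eq_constantCoeff_apply,
    coeff_subst_eq_sum_range ha f (N := 1) (by simp)]
  simp

theorem euler_subst (ha : constantCoeff a = 0) (f : PowerSeries R) :
    euler (f.subst a) = euler a * (PowerSeries.derivative R f).subst a := by
  ext m
  have hN : m.degree < m.degree + 1 := Nat.lt_succ_self _
  rw [coeff_euler, coeff_subst_eq_sum_range ha f (Nat.lt_succ_of_lt hN), Finset.mul_sum,
    Finset.sum_range_succ', coeff_mul_subst_eq_sum_range ha _ _ hN]
  have hzero : (m.degree : R) * (PowerSeries.coeff 0 f * coeff m (a ^ 0)) = 0 := by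
    rw [mul_left_comm, ← coeff_euler, pow_zero, euler.map_one_eq_zero, map_zero, mul_zero]
  rw [hzero, add_zero]
  refine Finset.sum_congr rfl fun k _ => ?_
  have hpow : euler (a ^ (k + 1)) = C ((k : R) + 1) * (euler a * a ^ k) := by
    rw [euler_pow_succ, map_add, map_natCast, map_one]
    ring
  rw [mul_left_comm, ← coeff_euler, hpow, coeff_C_mul, PowerSeries.coeff_derivative, mul_assoc]

end Substitution

section InverseSquareRoot

variable {σ K : Type*} [Field K] [CharZero K] {f z : MvPowerSeries σ K}

/-- The power series `(1 + z) ^ (-1/2)`, a junk value unless the constant coefficient of `z` is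
nilpotent. -/
def invSqrtOneAdd (z : MvPowerSeries σ K) : MvPowerSeries σ K :=
  (PowerSeries.binomialSeries K (-1 / 2 : K)).subst z

theorem one_add_X_mul_binomialSeries_neg_half_sq :
    (1 + PowerSeries.X) * PowerSeries.binomialSeries K (-1 / 2 : K) ^ 2 = 1 := by
  have hone := PowerSeries.binomialSeries_nat (R := K) (A := K) 1
  rw [pow_one] at hone
  rw [← hone, sq, ← PowerSeries.binomialSeries_add, ← PowerSeries.binomialSeries_add]
  convert PowerSeries.binomialSeries_zero (R := K) (A := K) using 2
  push_cast
  ring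

theorem constantCoeff_invSqrtOneAdd (hz : constantCoeff z = 0) :
    constantCoeff (invSqrtOneAdd z) = 1 := by
  rw [invSqrtOneAdd, constantCoeff_subst_eq_constantCoeff hz,
    PowerSeries.binomialSeries_constantCoeff]

theorem one_add_mul_invSqrtOneAdd_sq (hz : constantCoeff z = 0) :
    (1 + z) * invSqrtOneAdd z ^ 2 = 1 := by
  have hsubst : PowerSeries.HasSubst z := .of_constantCoeff_zero hz
  have h := congrArg (PowerSeries.substAlgHom (R := K) hsubst)
    (one_add_X_mul_binomialSeries_neg_half_sq (K := K))
  rwa [map_mul, map_pow, map_add, map_one, PowerSeries.substAlgHom_X,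
    PowerSeries.coe_substAlgHom] at h

theorem eq_invSqrtOneAdd (hz : constantCoeff z = 0) (hf : constantCoeff f = 1)
    (h : (1 + z) * f ^ 2 = 1) : f = invSqrtOneAdd z := by
  have hne : (1 + z) ≠ 0 := left_ne_zero_of_mul_eq_one h
  have hsq : f ^ 2 = invSqrtOneAdd z ^ 2 :=
    mul_left_cancel₀ hne (h.trans (one_add_mul_invSqrtOneAdd_sq hz).symm)
  refine (sq_eq_sq_iff_eq_or_eq_neg.mp hsq).resolve_right fun hneg => ?_
  have hconst := congrArg constantCoeff hneg
  rw [map_neg, hf, constantCoeff_invSqrtOneAdd hz] at hconst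
  norm_num at hconst

theorem one_add_mul_invSqrtOneAdd_mul_add_two (hz : constantCoeff z = 0) :
    (1 + z) * invSqrtOneAdd (z * (z + 2)) = 1 := by
  have hinv : (1 + z) * (1 + z)⁻¹ = 1 := MvPowerSeries.mul_inv_cancel _ (by simp [hz])
  rw [← eq_invSqrtOneAdd (f := (1 + z)⁻¹) (by simp [hz]) (by simp [hz]), hinv]
  linear_combination ((1 + z) * (1 + z)⁻¹ + 1) * hinv

end InverseSquareRoot

section Hyperbolic

variable {σ K : Type*} [Field K]

variable (K) in
/-- The power series `cosh √X`. -/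
def coshSqrt : PowerSeries K := .mk fun n => ((2 * n).factorial : K)⁻¹

variable (K) in
/-- The power series `sinh √X / √X`. -/
def sinhSqrtDivSqrt : PowerSeries K := .mk fun n => ((2 * n + 1).factorial : K)⁻¹

/-- The series `cosh (P√(xy)) + √(x/y) sinh (P√(xy))`, the left-hand side of equation (21), written
without square roots. -/
def coshAddSinh (P x y : MvPowerSeries σ K) : MvPowerSeries σ K :=
  (coshSqrt K).subst (P ^ 2 * (x * y)) + x * (P * (sinhSqrtDivSqrt K).subst (P ^ 2 * (x * y)))

theorem coeff_coshSqrt (n : ℕ) :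
    PowerSeries.coeff n (coshSqrt K) = ((2 * n).factorial : K)⁻¹ :=
  PowerSeries.coeff_mk ..

theorem coeff_sinhSqrtDivSqrt (n : ℕ) :
    PowerSeries.coeff n (sinhSqrtDivSqrt K) = ((2 * n + 1).factorial : K)⁻¹ :=
  PowerSeries.coeff_mk ..

variable {P x y z : MvPowerSeries σ K}

theorem constantCoeff_coshAddSinh (hx : constantCoeff x = 0) :
    constantCoeff (coshAddSinh P x y) = 1 := by
  have hw : constantCoeff (P ^ 2 * (x * y)) = 0 := by simp [hx]
  rw [coshAddSinh, map_add, map_mul, hx, zero_mul, add_zero,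
    constantCoeff_subst_eq_constantCoeff hw, ← PowerSeries.coeff_zero_eq_constantCoeff_apply,
    coeff_coshSqrt, mul_zero, Nat.factorial_zero, Nat.cast_one, inv_one]

variable [CharZero K]

theorem two_mul_succ_mul_coeff_succ_coshSqrt (n : ℕ) :
    2 * (n + 1) * PowerSeries.coeff (n + 1) (coshSqrt K) =
      PowerSeries.coeff n (sinhSqrtDivSqrt K) := by
  have hfac : (2 * (n + 1)).factorial = 2 * (n + 1) * (2 * n + 1).factorial :=
    (2 * n + 1).factorial_succ
  have hne : (2 * (n + 1) : K) ≠ 0 := mul_ne_zero two_ne_zero n.cast_add_one_ne_zero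
  rw [coeff_coshSqrt, coeff_sinhSqrtDivSqrt, hfac]
  push_cast
  rw [mul_inv, mul_inv_cancel_left₀ hne]

theorem two_mul_add_one_mul_coeff_sinhSqrtDivSqrt (n : ℕ) :
    (2 * n + 1) * PowerSeries.coeff n (sinhSqrtDivSqrt K) = PowerSeries.coeff n (coshSqrt K) := by
  have hne : (2 * n + 1 : K) ≠ 0 := mod_cast (2 * n).cast_add_one_ne_zero (R := K)
  rw [coeff_coshSqrt, coeff_sinhSqrtDivSqrt, Nat.factorial_succ]
  push_cast
  rw [mul_inv, mul_inv_cancel_left₀ hne]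

theorem two_mul_derivative_coshSqrt :
    2 * PowerSeries.derivative K (coshSqrt K) = sinhSqrtDivSqrt K := by
  ext n
  rw [two_mul, map_add, PowerSeries.coeff_derivative, ← two_mul_succ_mul_coeff_succ_coshSqrt]
  ring

theorem two_mul_X_mul_derivative_sinhSqrtDivSqrt_add :
    2 * (PowerSeries.X * PowerSeries.derivative K (sinhSqrtDivSqrt K)) + sinhSqrtDivSqrt K =
      coshSqrt K := by
  ext n
  rw [← two_mul_add_one_mul_coeff_sinhSqrtDivSqrt, two_mul, map_add, map_add]
  cases n with
  | zero => simp
  | succ n =>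
    rw [PowerSeries.coeff_succ_X_mul, PowerSeries.coeff_derivative]
    push_cast
    ring

theorem euler_subst_coshSqrt (hz₀ : constantCoeff z = 0) (hz : euler z = 2 * z) :
    euler ((coshSqrt K).subst (P ^ 2 * z)) =
      z * (euler P + P) * (P * (sinhSqrtDivSqrt K).subst (P ^ 2 * z)) := by
  have hw : constantCoeff (P ^ 2 * z) = 0 := by rw [map_mul, hz₀, mul_zero]
  have hderiv := congrArg (PowerSeries.substAlgHom (.of_constantCoeff_zero hw))
    (two_mul_derivative_coshSqrt (K := K))
  rw [map_mul, map_ofNat, PowerSeries.coe_substAlgHom] at hderiv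
  rw [euler_subst hw, euler_sq_mul_of_euler_eq_two_mul hz, ← hderiv]
  ring

theorem euler_add_self_mul_subst_sinhSqrtDivSqrt (hz₀ : constantCoeff z = 0)
    (hz : euler z = 2 * z) :
    euler (P * (sinhSqrtDivSqrt K).subst (P ^ 2 * z)) +
        P * (sinhSqrtDivSqrt K).subst (P ^ 2 * z) =
      (euler P + P) * (coshSqrt K).subst (P ^ 2 * z) := by
  have hw : constantCoeff (P ^ 2 * z) = 0 := by rw [map_mul, hz₀, mul_zero]
  have hderiv := congrArg (PowerSeries.substAlgHom (.of_constantCoeff_zero hw))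
    (two_mul_X_mul_derivative_sinhSqrtDivSqrt_add (K := K))
  rw [map_add, map_mul, map_mul, map_ofNat, PowerSeries.substAlgHom_X,
    PowerSeries.coe_substAlgHom] at hderiv
  rw [euler_mul, euler_subst hw, euler_sq_mul_of_euler_eq_two_mul hz, ← hderiv]
  ring

theorem euler_coshAddSinh (hx : euler x = x) (hy : euler y = y) :
    euler (coshAddSinh P x y) = x * (euler P + P) * coshAddSinh P y x := by
  have hxy₀ : constantCoeff (x * y) = 0 := by
    rw [map_mul, constantCoeff_eq_zero_of_euler_eq_self hx, zero_mul]
  have hxy : euler (x * y) = 2 * (x * y) := by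
    rw [euler_mul, hx, hy]
    ring
  rw [coshAddSinh, coshAddSinh, mul_comm y x, map_add, euler_mul x, hx,
    euler_subst_coshSqrt hxy₀ hxy]
  linear_combination x * euler_add_self_mul_subst_sinhSqrtDivSqrt (P := P) hxy₀ hxy

theorem coshAddSinh_sq_of_coshAddSinh_eq (hx : euler x = x) (hy : euler y = y)
    (hx₀ : x ≠ 0) (h : coshAddSinh P x y = 1 + x) :
    (euler P + P) * coshAddSinh P y x = 1 ∧ coshAddSinh P y x ^ 2 = 1 + y * (x + 2) := by
  have hy₀ := constantCoeff_eq_zero_of_euler_eq_self hy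
  have hmul : (euler P + P) * coshAddSinh P y x = 1 := by
    refine mul_left_cancel₀ hx₀ ?_
    rw [← mul_assoc, ← euler_coshAddSinh hx hy, h, map_add, euler.map_one_eq_zero, hx, zero_add,
      mul_one]
  refine ⟨hmul, eq_of_euler_eq ?_ ?_⟩
  · rw [euler_pow_succ, euler_coshAddSinh hy hx, h, euler_one_add_mul_add_two hx hy]
    linear_combination (2 * y * (1 + x)) * hmul
  · simp [constantCoeff_coshAddSinh hy₀, hy₀]

theorem euler_add_self_eq_of_coshAddSinh_eq (hx : euler x = x) (hy : euler y = y) (hx₀ : x ≠ 0)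
    (h : coshAddSinh P x y = 1 + x) : euler P + P = invSqrtOneAdd (y * (x + 2)) := by
  have hy₀ := constantCoeff_eq_zero_of_euler_eq_self hy
  obtain ⟨hmul, hsq⟩ := coshAddSinh_sq_of_coshAddSinh_eq hx hy hx₀ h
  refine eq_invSqrtOneAdd (by rw [map_mul, hy₀, zero_mul]) ?_ ?_
  · have hconst := congrArg constantCoeff hmul
    rwa [map_mul, constantCoeff_coshAddSinh hy₀, mul_one, map_one] at hconst
  · rw [← hsq, ← mul_pow, mul_comm, hmul, one_pow]

theorem euler_one_add_mul_invSqrtOneAdd (hz : constantCoeff z = 0) :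
    2 * euler ((1 + z) * invSqrtOneAdd z) = euler (1 + z) * invSqrtOneAdd z := by
  have hinv := one_add_mul_invSqrtOneAdd_sq hz
  have hsq : ((1 + z) * invSqrtOneAdd z) ^ 2 = 1 + z := by
    linear_combination (1 + z) * hinv
  have heuler := congrArg euler hsq
  rw [euler_pow_succ] at heuler
  push_cast at heuler
  linear_combination invSqrtOneAdd z * heuler -
    2 * euler ((1 + z) * invSqrtOneAdd z) * hinv

theorem coshAddSinh_eq_of_euler_add_self_eq (hx : euler x = x) (hy : euler y = y)
    (h : euler P + P = invSqrtOneAdd (y * (x + 2))) : coshAddSinh P x y = 1 + x := by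
  have hx₀ := constantCoeff_eq_zero_of_euler_eq_self hx
  have hy₀ := constantCoeff_eq_zero_of_euler_eq_self hy
  have hz : constantCoeff (y * (x + 2)) = 0 := by rw [map_mul, hy₀, zero_mul]
  set β := invSqrtOneAdd (y * (x + 2)) with hβ
  have hβ_sq : (1 + y * (x + 2)) * β ^ 2 = 1 := one_add_mul_invSqrtOneAdd_sq hz
  have htwo : (2 : MvPowerSeries σ K) ≠ 0 := fun h₂ => by
    simpa only [map_ofNat, map_zero, OfNat.ofNat_ne_zero] using congrArg constantCoeff h₂
  have hroot : euler ((1 + y * (x + 2)) * β) = y * (1 + x) * β := by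
    refine mul_left_cancel₀ htwo ?_
    rw [euler_one_add_mul_invSqrtOneAdd hz, euler_one_add_mul_add_two hx hy]
    ring
  refine sub_eq_zero.mp <| eq_zero_of_euler_eq_mul (c := x * β) (d := y * β)
    (g := coshAddSinh P y x - (1 + y * (x + 2)) * β) ?_ ?_ ?_ ?_ ?_ ?_
  · simp [hx₀]
  · simp [hy₀]
  · simp [constantCoeff_coshAddSinh hx₀, hx₀]
  · simp [constantCoeff_coshAddSinh hy₀, hy₀, hβ, constantCoeff_invSqrtOneAdd hz]
  · rw [map_sub, map_add, euler.map_one_eq_zero, euler_coshAddSinh hx hy, h, hx]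
    linear_combination x * hβ_sq
  · rw [map_sub, euler_coshAddSinh hy hx, h, hroot]
    ring

end Hyperbolic

section Equation

variable {P : R2}

theorem succ_mul_ringChoose_succ {R : Type*} [CommRing R] [BinomialRing R] (r : R) (n : ℕ) :
    (n + 1) * Ring.choose r (n + 1) = (r - n) * Ring.choose r n := by
  have h := Ring.choose_smul_choose r n.le_succ
  rwa [Nat.succ_eq_add_one, Nat.choose_succ_self_right, Nat.add_sub_cancel_left,
    Ring.choose_one_right, nsmul_eq_mul, Nat.cast_add_one, mul_comm (Ring.choose r n)] at h

theorem succ_mul_cb_succ (n : ℕ) : (n + 1) * cb (n + 1) = (-1 / 2 - n) * cb n := by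
  have hcentral : ((n : ℚ) + 1) * (2 * (n + 1)).choose (n + 1) =
      2 * (2 * n + 1) * (2 * n).choose n := mod_cast n.succ_mul_centralBinom_succ
  rw [cb, cb, pow_succ, pow_succ]
  linear_combination (-1) ^ n * (-1) / (4 ^ n * 4) * hcentral

theorem cb_eq_choose (n : ℕ) : cb n = Ring.choose (-1 / 2 : ℚ) n := by
  induction n with
  | zero => simp [cb]
  | succ n ih =>
    have hne : (n + 1 : ℚ) ≠ 0 := n.cast_add_one_ne_zero
    refine mul_left_cancel₀ hne ?_
    rw [succ_mul_cb_succ, ih, succ_mul_ringChoose_succ]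

theorem coeff_binomialSeries_neg_half (n : ℕ) :
    PowerSeries.coeff n (PowerSeries.binomialSeries ℚ (-1 / 2 : ℚ)) = cb n := by
  rw [cb_eq_choose, PowerSeries.binomialSeries_coeff, smul_eq_mul, mul_one]

theorem constantCoeff_u : constantCoeff u = 0 := constantCoeff_X 0

theorem constantCoeff_v : constantCoeff v = 0 := constantCoeff_X 1

theorem u_ne_zero : u ≠ 0 := fun h =>
  one_ne_zero ((coeff_index_single_self_X (R := ℚ) 0).symm.trans (congrArg (coeff _) h))

theorem euler_u : euler u = u := euler_X 0

theorem euler_v : euler v = v := euler_X 1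

theorem S1_eq_subst (P : R2) : S1 P = (coshSqrt ℚ).subst (P ^ 2 * (u * v)) := by
  ext m
  have hw : constantCoeff (P ^ 2 * (u * v)) = 0 := by simp [constantCoeff_u]
  rw [coeff_subst_eq_sum_range hw _ (Nat.lt_succ_self m.degree)]
  change ∑ n ∈ Finset.range (m.degree + 1), _ = _
  refine Finset.sum_congr rfl fun n _ => ?_
  rw [coeff_smul, coeff_coshSqrt, mul_pow (P ^ 2), ← pow_mul]

theorem S2_eq_mul_subst (P : R2) :
    S2 P = u * (P * (sinhSqrtDivSqrt ℚ).subst (P ^ 2 * (u * v))) := by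
  ext m
  have hw : constantCoeff (P ^ 2 * (u * v)) = 0 := by simp [constantCoeff_u]
  rw [← mul_assoc, coeff_mul_subst_eq_sum_range hw _ _ (Nat.lt_succ_self m.degree)]
  change ∑ n ∈ Finset.range (m.degree + 1), _ = _
  refine Finset.sum_congr rfl fun n _ => ?_
  have hterm : P ^ (2 * n + 1) * u ^ (n + 1) * v ^ n = u * P * (P ^ 2 * (u * v)) ^ n := by ring
  rw [coeff_smul, coeff_sinhSqrtDivSqrt, hterm]

theorem eq21_iff_coshAddSinh_eq : Eq21 P ↔ coshAddSinh P u v = 1 + u := by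
  rw [Eq21, S1_eq_subst, S2_eq_mul_subst, coshAddSinh]

theorem eq21_iff_euler_add_self_eq :
    Eq21 P ↔ euler P + P = invSqrtOneAdd (v * (u + 2)) := by
  rw [eq21_iff_coshAddSinh_eq]
  exact ⟨euler_add_self_eq_of_coshAddSinh_eq euler_u euler_v u_ne_zero,
    coshAddSinh_eq_of_euler_add_self_eq euler_u euler_v⟩

theorem euler_Psi0_add_Psi0 : euler Psi0 + Psi0 = invSqrtOneAdd (v * (u + 2)) := by
  have hfactor : invSqrtOneAdd (v * (u + 2)) =
      (1 + u) * invSqrtOneAdd (u * (u + 2)) * invSqrtOneAdd (v * (u + 2)) := by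
    rw [one_add_mul_invSqrtOneAdd_mul_add_two constantCoeff_u, one_mul]
  have hu : constantCoeff (u * (u + 2)) = 0 := by rw [map_mul, constantCoeff_u, zero_mul]
  have hv : constantCoeff (v * (u + 2)) = 0 := by rw [map_mul, constantCoeff_v, zero_mul]
  ext m
  rw [hfactor, invSqrtOneAdd, invSqrtOneAdd,
    coeff_mul_subst_mul_subst_eq_sum_range hu hv _ _ _ (Nat.lt_succ_self m.degree),
    coeff_euler_add_self]
  change _ * ∑ p ∈ Finset.range (m.degree + 1), ∑ q ∈ Finset.range (m.degree + 1), _ = _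
  rw [Finset.mul_sum]
  refine Finset.sum_congr rfl fun p _ => ?_
  rw [Finset.mul_sum]
  refine Finset.sum_congr rfl fun q _ => ?_
  have hne : (2 * (p + q + 1) : ℚ) ≠ 0 := by positivity
  rw [coeff_smul, mul_left_comm, ← coeff_euler_add_self,
    euler_pow_mul_pow_mul_add_two_pow_add_self euler_u euler_v, coeff_C_mul,
    ← mul_assoc, div_mul_cancel₀ _ hne, coeff_binomialSeries_neg_half,
    coeff_binomialSeries_neg_half]

end Equation

theorem stmt3 : Eq21 Psi0 ∧ ∀ P : R2, Eq21 P → P = Psi0 :=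
  ⟨eq21_iff_euler_add_self_eq.mpr euler_Psi0_add_Psi0, fun _ hP =>
    eq_of_euler_add_self_eq <|
      (eq21_iff_euler_add_self_eq.mp hP).trans euler_Psi0_add_Psi0.symm⟩
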